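/- Let 0 < β < 1, set K = cot²((1−β)π/4), and let φ : 𝔻 → ℂ be an injective holomorphic function with φ(0) = 0 such that for some real δ with |δ| < βπ/2 the spiral-shapedness condition |arg(e^{iδ}·z·φ′(z)/φ(z))| ≤ βπ/2 holds for all z ∈ 𝔻, z ≠ 0. Suppose Ω = φ(𝔻) is bounded. Then for every α with 2 < α, α(K² − 1) < 2K², and ν := 10^{4α}·(24π²·cot⁴((1−β)π/4))^α·(α−2)/(α−1) < 1, every test function f on Ω satisfies ∬_Ω |f − f_Ω|² dxdy ≤ (C_α²·cot⁴((1−β)π/4)/π) · ((2α−2)/(α−2))^{(2α−2)/α} · exp{π²(2 + π⁴)²·cot⁴((1−β)π/4)/(2 log 3)} · |Ω| · ∬_Ω |∇f|² dxdy, where C_α = 10⁶/[(α−1)(1−ν)]^{1/α}. -/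

import Mathlib

open MeasureTheory Metric Real
open scoped ENNReal NNReal

/-!
If `Ω = φ(𝔻)` is spiral-shaped with angle `θ`, then along the flow `w ↦ e^{-tμ} w` the derivative of
`‖φ⁻¹(w)‖²` is `-2 ‖z‖² Re (μ φ(z) / (z φ'(z)))`, so the flow maps `Ω` into itself for every `μ` in
the disc of centre `s e^{-iδ}` and radius `s cos θ`. Once `s cos θ ≥ π` these `μ` realise every
rotation, and hence `Ω` lies between two concentric balls whose radii have ratio
`exp (π cos δ / cos θ)`.

Flowing for unit time therefore carries `Ω` into a ball inside `Ω`. Integrating `∇f` along the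
flow lines controls `f - f ∘ flow` in `L²(Ω)`, and on the ball the Poincaré inequality for convex
sets, proved by contracting towards a second integration point, controls the rest.
-/

open Set in
theorem sq_lintegral_le_measure_univ_mul_lintegral_sq {X : Type*} [MeasurableSpace X]
    {μ : Measure X} {g : X → ℝ≥0∞} (hg : AEMeasurable g μ) :
    (∫⁻ x, g x ∂μ) ^ 2 ≤ μ univ * ∫⁻ x, g x ^ 2 ∂μ := by
  have holder := ENNReal.lintegral_mul_le_Lp_mul_Lq μ Real.HolderConjugate.two_two
    aemeasurable_const hg (f := fun _ ↦ 1)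
  simp only [Pi.mul_apply, one_mul, ENNReal.rpow_two, one_pow, lintegral_one] at holder
  calc (∫⁻ x, g x ∂μ) ^ 2
      ≤ (μ univ ^ (1 / 2 : ℝ) * (∫⁻ x, g x ^ 2 ∂μ) ^ (1 / 2 : ℝ)) ^ 2 := by gcongr
    _ = μ univ * ∫⁻ x, g x ^ 2 ∂μ := by
      rw [mul_pow, ← ENNReal.rpow_mul_natCast, ← ENNReal.rpow_mul_natCast]
      norm_num

theorem enorm_sub_sq_le {F : Type*} [NormedAddCommGroup F] (x y z : F) :
    ‖x - z‖ₑ ^ 2 ≤ 2 * (‖y - x‖ₑ ^ 2 + ‖y - z‖ₑ ^ 2) := by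
  calc ‖x - z‖ₑ ^ 2 ≤ (‖y - x‖ₑ + ‖y - z‖ₑ) ^ 2 := by
        gcongr
        rw [← enorm_sub_rev x y, ← sub_add_sub_cancel x y z]
        exact enorm_add_le (x - y) (y - z)
    _ ≤ 2 * (‖y - x‖ₑ ^ 2 + ‖y - z‖ₑ ^ 2) := by
        have := ENNReal.rpow_add_le_mul_rpow_add_rpow ‖y - x‖ₑ ‖y - z‖ₑ one_le_two
        norm_num at this
        exact this

theorem lintegral_lintegral_add_swap {X : Type*} [MeasurableSpace X] {μ : Measure X} [SFinite μ]
    {Q : X → X → ℝ≥0∞} (hQ : AEMeasurable (Function.uncurry Q) (μ.prod μ)) :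
    ∫⁻ x, ∫⁻ y, (Q x y + Q y x) ∂μ ∂μ = 2 * ∫⁻ x, ∫⁻ y, Q y x ∂μ ∂μ := by
  have swap : ∫⁻ x, ∫⁻ y, Q x y ∂μ ∂μ = ∫⁻ x, ∫⁻ y, Q y x ∂μ ∂μ := lintegral_lintegral_swap hQ
  calc ∫⁻ x, ∫⁻ y, (Q x y + Q y x) ∂μ ∂μ
      = ∫⁻ p, (Function.uncurry Q p + Function.uncurry Q p.swap) ∂μ.prod μ :=
        (lintegral_prod _ (hQ.add hQ.prod_swap)).symm
    _ = ∫⁻ x, ∫⁻ y, Q x y ∂μ ∂μ + ∫⁻ x, ∫⁻ y, Q y x ∂μ ∂μ := by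
        rw [lintegral_add_left' hQ, lintegral_prod _ hQ, lintegral_prod _ hQ.prod_swap]
        rfl
    _ = 2 * ∫⁻ x, ∫⁻ y, Q y x ∂μ ∂μ := by rw [swap, two_mul]

open ProbabilityTheory in
theorem integral_sub_average_sq_le {X : Type*} [MeasurableSpace X] {μ : Measure X}
    [IsFiniteMeasure μ] {f : X → ℝ} (hf : AEStronglyMeasurable f μ) (c : ℝ) :
    ∫ x, (f x - ⨍ y, f y ∂μ) ^ 2 ∂μ ≤ ∫ x, (f x - c) ^ 2 ∂μ := by
  rcases eq_zero_or_neZero μ with rfl | _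
  · simp
  have hf' : AEStronglyMeasurable f ((μ Set.univ)⁻¹ • μ) := hf.smul_measure _
  have key : ⨍ x, (f x - ⨍ y, f y ∂μ) ^ 2 ∂μ ≤ ⨍ x, (f x - c) ^ 2 ∂μ := by
    simp only [average_eq']
    rw [← variance_eq_integral hf'.aemeasurable, ← variance_sub_const hf' c]
    exact variance_le_expectation_sq (hf'.sub aestronglyMeasurable_const)
  rw [← measure_smul_average μ fun x ↦ (f x - c) ^ 2, ← measure_smul_average]
  exact mul_le_mul_of_nonneg_left key measureReal_nonneg

theorem integral_sub_average_sq_le_of_lintegral_le {X : Type*} [MeasurableSpace X] {μ : Measure X}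
    [IsFiniteMeasure μ] {E : Type*} [SeminormedAddCommGroup E] {f : X → ℝ} {g : X → E}
    (hf : AEStronglyMeasurable f μ) (hg : Integrable (fun x ↦ ‖g x‖ ^ 2) μ) {c C : ℝ} (hC : 0 ≤ C)
    (h : ∫⁻ x, ‖f x - c‖ₑ ^ 2 ∂μ ≤ ENNReal.ofReal C * ∫⁻ x, ‖g x‖ₑ ^ 2 ∂μ) :
    ∫ x, (f x - ⨍ y, f y ∂μ) ^ 2 ∂μ ≤ C * ∫ x, ‖g x‖ ^ 2 ∂μ := by
  refine (integral_sub_average_sq_le hf c).trans ?_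
  have lintegral_g : ∫⁻ x, ‖g x‖ₑ ^ 2 ∂μ = ENNReal.ofReal (∫ x, ‖g x‖ ^ 2 ∂μ) := by
    rw [ofReal_integral_eq_lintegral_ofReal hg (.of_forall fun x ↦ sq_nonneg _)]
    simp only [ENNReal.ofReal_pow (norm_nonneg _), ofReal_norm]
  have integral_f : ∫ x, (f x - c) ^ 2 ∂μ = (∫⁻ x, ‖f x - c‖ₑ ^ 2 ∂μ).toReal := by
    have hm : AEStronglyMeasurable (fun x ↦ (f x - c) ^ 2) μ :=
      (hf.sub aestronglyMeasurable_const).pow 2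
    simp_rw [← enorm_pow, ← integral_norm_eq_lintegral_enorm hm, norm_pow, Real.norm_eq_abs,
      sq_abs]
  rw [integral_f]
  refine ENNReal.toReal_le_of_le_ofReal (by positivity) ?_
  rwa [ENNReal.ofReal_mul hC, ← lintegral_g]

section
open Set Filter Topology

/-- The linear flow about `b` with complex rate `-μ`, whose orbits are logarithmic spirals; for real
positive `μ` it is the radial contraction towards `b`. -/
noncomputable def spiralFlow (b μ : ℂ) (t : ℝ) (z : ℂ) : ℂ :=
  b + Complex.exp (-(t * μ)) * (z - b)

namespace spiralFlow

variable {b μ : ℂ}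

@[simp]
theorem zero (z : ℂ) : spiralFlow b μ 0 z = z := by simp [spiralFlow]

theorem continuous_uncurry : Continuous fun p : ℂ × ℝ ↦ spiralFlow b μ p.2 p.1 := by
  unfold spiralFlow
  fun_prop

theorem hasDerivAt_time (t : ℝ) (z : ℂ) :
    HasDerivAt (fun t ↦ spiralFlow b μ t z) (-μ * (Complex.exp (-(t * μ)) * (z - b))) t := by
  have exponent : HasDerivAt (fun t : ℝ ↦ -((t : ℂ) * μ)) (-(1 * μ)) t :=
    (Complex.ofRealCLM.hasDerivAt.mul_const μ).neg
  exact ((exponent.cexp.mul_const (z - b)).const_add b).congr_deriv (by ring)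

theorem injective (t : ℝ) : Function.Injective (spiralFlow b μ t) := fun x y h ↦ by
  simpa [spiralFlow, Complex.exp_ne_zero] using h

theorem enorm_exp_sq_mul_setLIntegral_comp_le {s D : Set ℂ} {t : ℝ} (hs : MeasurableSet s)
    (hsD : MapsTo (spiralFlow b μ t) s D) (g : ℂ → ℝ≥0∞) :
    ‖Complex.exp (-(t * μ))‖ₑ ^ 2 * ∫⁻ x in s, g (spiralFlow b μ t x) ≤ ∫⁻ x in D, g x := by
  set a := Complex.exp (-(t * μ))
  set L : ℂ →L[ℝ] ℂ := ContinuousLinearMap.mul ℝ ℂ a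
  have hasFDeriv (x : ℂ) : HasFDerivAt (spiralFlow b μ t) L x :=
    (L.hasFDerivAt.comp x ((hasFDerivAt_id x).sub_const b)).const_add b
  have det_L : ENNReal.ofReal |L.det| = ‖a‖ₑ ^ 2 := by
    have : L.det = ‖a‖ ^ 2 := by
      rw [← Complex.normSq_eq_norm_sq]
      exact Algebra.norm_complex_apply a
    rw [this, abs_of_nonneg (sq_nonneg _), ENNReal.ofReal_pow (norm_nonneg _), ofReal_norm]
  calc ‖a‖ₑ ^ 2 * ∫⁻ x in s, g (spiralFlow b μ t x)
      = ∫⁻ x in s, ENNReal.ofReal |L.det| * g (spiralFlow b μ t x) := by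
        rw [det_L, lintegral_const_mul' _ _ (by simp)]
    _ = ∫⁻ x in spiralFlow b μ t '' s, g x :=
        (lintegral_image_eq_lintegral_abs_det_fderiv_mul volume hs
          (fun x _ ↦ (hasFDeriv x).hasFDerivWithinAt) (injective t).injOn g).symm
    _ ≤ ∫⁻ x in D, g x := lintegral_mono_set hsD.image_subset

end spiralFlow

section Contraction

variable {F : Type*} [NormedAddCommGroup F] [NormedSpace ℝ F] {U : Set ℂ} {f : ℂ → F} {b μ : ℂ}
  {R : ℝ≥0∞}

theorem enorm_spiralFlow_one_sub_sq_le (hU : IsOpen U) (hf : ContDiffOn ℝ 1 f U) {x : ℂ}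
    (hx : ∀ t ∈ Icc (0 : ℝ) 1, spiralFlow b μ t x ∈ U) (hR : ‖x - b‖ₑ ≤ R) :
    ‖f (spiralFlow b μ 1 x) - f x‖ₑ ^ 2 ≤ ∫⁻ t in Icc (0 : ℝ) 1,
      ‖Complex.exp (-(t * μ))‖ₑ ^ 2 * (‖μ‖ₑ ^ 2 * R ^ 2 *
        ‖fderiv ℝ f (spiralFlow b μ t x)‖ₑ ^ 2) := by
  have contDiff_path : ContDiff ℝ 1 fun t ↦ spiralFlow b μ t x :=
    contDiff_const.add
      ((Complex.ofRealCLM.contDiff.mul contDiff_const).neg.cexp.mul contDiff_const)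
  have contDiffOn_comp : ContDiffOn ℝ 1 (fun t ↦ f (spiralFlow b μ t x)) (Icc 0 1) :=
    hf.comp contDiff_path.contDiffOn hx
  have enorm_deriv_le (t : ℝ) (ht : t ∈ Icc (0 : ℝ) 1) :
      ‖deriv (fun t ↦ f (spiralFlow b μ t x)) t‖ₑ ≤
        ‖fderiv ℝ f (spiralFlow b μ t x)‖ₑ * (‖μ‖ₑ * (‖Complex.exp (-(t * μ))‖ₑ * R)) := by
    have hfd := (hf.differentiableOn one_ne_zero).differentiableAt (hU.mem_nhds (hx t ht))
    have hcomp : HasDerivAt (fun t ↦ f (spiralFlow b μ t x)) _ t :=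
      hfd.hasFDerivAt.comp_hasDerivAt t (spiralFlow.hasDerivAt_time t x)
    rw [hcomp.deriv]
    refine (ContinuousLinearMap.le_opENorm _ _).trans ?_
    rw [enorm_mul, enorm_mul, enorm_neg]
    gcongr
  have hm : AEMeasurable (fun t ↦ ‖deriv (fun t ↦ f (spiralFlow b μ t x)) t‖ₑ)
      (volume.restrict (Icc (0 : ℝ) 1)) := by
    rw [← restrict_Ioo_eq_restrict_Icc]
    exact ((contDiffOn_comp.mono Ioo_subset_Icc_self).continuousOn_deriv_of_isOpen isOpen_Ioo
      le_rfl).enorm.aemeasurable measurableSet_Ioo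
  calc ‖f (spiralFlow b μ 1 x) - f x‖ₑ ^ 2
      ≤ (∫⁻ t in Icc (0 : ℝ) 1, ‖deriv (fun t ↦ f (spiralFlow b μ t x)) t‖ₑ) ^ 2 := by
        gcongr
        simpa using enorm_sub_le_lintegral_deriv_of_contDiffOn_Icc contDiffOn_comp zero_le_one
    _ ≤ ∫⁻ t in Icc (0 : ℝ) 1, ‖deriv (fun t ↦ f (spiralFlow b μ t x)) t‖ₑ ^ 2 := by
        simpa using sq_lintegral_le_measure_univ_mul_lintegral_sq hm
    _ ≤ _ := by
        refine setLIntegral_mono' measurableSet_Icc fun t ht ↦ ?_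
        calc _ ≤ _ := pow_le_pow_left' (enorm_deriv_le t ht) 2
          _ = _ := by ring

theorem lintegral_enorm_spiralFlow_one_sub_sq_le (hU : IsOpen U) (hf : ContDiffOn ℝ 1 f U)
    (hflow : ∀ t ∈ Icc (0 : ℝ) 1, MapsTo (spiralFlow b μ t) U U) (hR : ∀ x ∈ U, ‖x - b‖ₑ ≤ R) :
    ∫⁻ x in U, ‖f (spiralFlow b μ 1 x) - f x‖ₑ ^ 2 ≤
      ‖μ‖ₑ ^ 2 * R ^ 2 * ∫⁻ x in U, ‖fderiv ℝ f x‖ₑ ^ 2 := by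
  have hfd : ContinuousOn (fderiv ℝ f) U := hf.continuousOn_fderiv_of_isOpen hU le_rfl
  have hm : AEMeasurable (Function.uncurry fun (x : ℂ) (t : ℝ) ↦ ‖Complex.exp (-(t * μ))‖ₑ ^ 2 *
      (‖μ‖ₑ ^ 2 * R ^ 2 * ‖fderiv ℝ f (spiralFlow b μ t x)‖ₑ ^ 2))
      ((volume.restrict U).prod (volume.restrict (Icc (0 : ℝ) 1))) := by
    rw [Measure.prod_restrict]
    have hfd_flow : ContinuousOn (fun p : ℂ × ℝ ↦ fderiv ℝ f (spiralFlow b μ p.2 p.1))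
        (U ×ˢ Icc (0 : ℝ) 1) :=
      hfd.comp spiralFlow.continuous_uncurry.continuousOn fun p hp ↦ hflow p.2 hp.2 hp.1
    have hjacobian : Continuous fun p : ℂ × ℝ ↦ ‖Complex.exp (-(p.2 * μ))‖ₑ ^ 2 :=
      (ENNReal.continuous_pow 2).comp (continuous_enorm.comp (by fun_prop))
    exact hjacobian.aemeasurable.mul
      (((hfd_flow.enorm.aemeasurable (hU.measurableSet.prod measurableSet_Icc)).pow_const
        2).const_mul _)
  calc ∫⁻ x in U, ‖f (spiralFlow b μ 1 x) - f x‖ₑ ^ 2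
      ≤ ∫⁻ x in U, ∫⁻ t in Icc (0 : ℝ) 1, ‖Complex.exp (-(t * μ))‖ₑ ^ 2 *
          (‖μ‖ₑ ^ 2 * R ^ 2 * ‖fderiv ℝ f (spiralFlow b μ t x)‖ₑ ^ 2) :=
        setLIntegral_mono' hU.measurableSet fun x hx ↦
          enorm_spiralFlow_one_sub_sq_le hU hf (fun t ht ↦ hflow t ht hx) (hR x hx)
    _ = ∫⁻ t in Icc (0 : ℝ) 1, ∫⁻ x in U, ‖Complex.exp (-(t * μ))‖ₑ ^ 2 *
          (‖μ‖ₑ ^ 2 * R ^ 2 * ‖fderiv ℝ f (spiralFlow b μ t x)‖ₑ ^ 2) :=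
        lintegral_lintegral_swap hm
    _ = ∫⁻ t in Icc (0 : ℝ) 1, ‖Complex.exp (-(t * μ))‖ₑ ^ 2 * ∫⁻ x in U,
          (‖μ‖ₑ ^ 2 * R ^ 2 * ‖fderiv ℝ f (spiralFlow b μ t x)‖ₑ ^ 2) :=
        lintegral_congr fun t ↦ lintegral_const_mul' _ _ (by simp)
    _ ≤ ∫⁻ t in Icc (0 : ℝ) 1, ∫⁻ x in U, ‖μ‖ₑ ^ 2 * R ^ 2 * ‖fderiv ℝ f x‖ₑ ^ 2 :=
        setLIntegral_mono' measurableSet_Icc fun t ht ↦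
          spiralFlow.enorm_exp_sq_mul_setLIntegral_comp_le hU.measurableSet (hflow t ht)
            fun x ↦ ‖μ‖ₑ ^ 2 * R ^ 2 * ‖fderiv ℝ f x‖ₑ ^ 2
    _ = ‖μ‖ₑ ^ 2 * R ^ 2 * ∫⁻ x in U, ‖fderiv ℝ f x‖ₑ ^ 2 := by
        rw [setLIntegral_const, Real.volume_Icc, sub_zero, ENNReal.ofReal_one, mul_one,
          lintegral_const_mul'' _ ((hfd.enorm.aemeasurable hU.measurableSet).pow_const 2)]

end Contraction

section ConvexPoincare

variable {F : Type*} [NormedAddCommGroup F] [NormedSpace ℝ F] {U : Set ℂ} {f : ℂ → F}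

theorem spiralFlow.ofReal (b : ℂ) (a t : ℝ) (z : ℂ) :
    spiralFlow b a t z = b + rexp (-(t * a)) • (z - b) := by
  simp [spiralFlow]

theorem spiralFlow.log_two_one (y x : ℂ) : spiralFlow y (log 2 : ℝ) 1 x = midpoint ℝ x y := by
  rw [spiralFlow.ofReal, one_mul, Real.exp_neg, Real.exp_log two_pos, midpoint_comm,
    midpoint, AffineMap.lineMap_apply, invOf_eq_inv, vsub_eq_sub, vadd_eq_add, add_comm]

theorem lintegral_enorm_midpoint_sub_sq_le (hUo : IsOpen U) (hUc : Convex ℝ U)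
    (hf : ContDiffOn ℝ 1 f U) {y : ℂ} (hy : y ∈ U) :
    ∫⁻ x in U, ‖f (midpoint ℝ x y) - f x‖ₑ ^ 2 ≤
      ediam U ^ 2 * ∫⁻ x in U, ‖fderiv ℝ f x‖ₑ ^ 2 := by
  have log_two_pos : 0 < log 2 := log_pos one_lt_two
  have mapsTo_flow : ∀ t ∈ Icc (0 : ℝ) 1, MapsTo (spiralFlow y (log 2 : ℝ) t) U U := by
    intro t ht x hx
    rw [spiralFlow.ofReal]
    refine hUc.add_smul_sub_mem hy hx ⟨(exp_pos _).le, exp_le_one_iff.2 ?_⟩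
    have := ht.1
    simp only [Left.neg_nonpos_iff]
    positivity
  have enorm_log_two_le : ‖((log 2 : ℝ) : ℂ)‖ₑ ≤ 1 := by
    rw [← ofReal_norm, ENNReal.ofReal_le_one, Complex.norm_real, norm_of_nonneg log_two_pos.le]
    linarith [log_two_lt_d9]
  have h := lintegral_enorm_spiralFlow_one_sub_sq_le hUo hf mapsTo_flow (R := ediam U)
    fun x hx ↦ by simpa [edist_eq_enorm_sub] using edist_le_ediam_of_mem hx hy
  simp only [spiralFlow.log_two_one] at h
  calc _ ≤ _ := h
    _ ≤ 1 ^ 2 * ediam U ^ 2 * ∫⁻ x in U, ‖fderiv ℝ f x‖ₑ ^ 2 := by gcongr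
    _ = ediam U ^ 2 * ∫⁻ x in U, ‖fderiv ℝ f x‖ₑ ^ 2 := by rw [one_pow, one_mul]

theorem lintegral_lintegral_enorm_sub_sq_le (hUo : IsOpen U) (hUc : Convex ℝ U)
    (hf : ContDiffOn ℝ 1 f U) :
    ∫⁻ y in U, ∫⁻ x in U, ‖f x - f y‖ₑ ^ 2 ≤
      4 * ediam U ^ 2 * (∫⁻ x in U, ‖fderiv ℝ f x‖ₑ ^ 2) * volume U := by
  have continuousOn_midpoint :
      ContinuousOn (fun p : ℂ × ℂ ↦ f (midpoint ℝ p.1 p.2) - f p.1) (U ×ˢ U) := by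
    refine (hf.continuousOn.comp (Continuous.continuousOn ?_) fun p hp ↦
      hUc.midpoint_mem hp.1 hp.2).sub (hf.continuousOn.comp continuousOn_fst fun p hp ↦ hp.1)
    simp only [midpoint_eq_smul_add]
    fun_prop
  have hm : AEMeasurable (Function.uncurry fun x y ↦ ‖f (midpoint ℝ x y) - f x‖ₑ ^ 2)
      ((volume.restrict U).prod (volume.restrict U)) := by
    rw [Measure.prod_restrict]
    exact (continuousOn_midpoint.enorm.aemeasurable
      (hUo.measurableSet.prod hUo.measurableSet)).pow_const 2
  calc ∫⁻ y in U, ∫⁻ x in U, ‖f x - f y‖ₑ ^ 2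
      ≤ ∫⁻ y in U, ∫⁻ x in U, 2 * (‖f (midpoint ℝ y x) - f y‖ₑ ^ 2 +
          ‖f (midpoint ℝ x y) - f x‖ₑ ^ 2) := by
        refine lintegral_mono fun y ↦ lintegral_mono fun x ↦ ?_
        rw [midpoint_comm, add_comm]
        exact enorm_sub_sq_le _ _ _
    _ = 2 * (2 * ∫⁻ y in U, ∫⁻ x in U, ‖f (midpoint ℝ x y) - f x‖ₑ ^ 2) := by
        simp only [lintegral_const_mul' 2 _ ENNReal.ofNat_ne_top]
        rw [lintegral_lintegral_add_swap hm]
    _ ≤ 2 * (2 * ∫⁻ _ in U, ediam U ^ 2 * ∫⁻ x in U, ‖fderiv ℝ f x‖ₑ ^ 2) := by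
        gcongr 2 * (2 * ?_)
        exact setLIntegral_mono' hUo.measurableSet fun y hy ↦
          lintegral_enorm_midpoint_sub_sq_le hUo hUc hf hy
    _ = 4 * ediam U ^ 2 * (∫⁻ x in U, ‖fderiv ℝ f x‖ₑ ^ 2) * volume U := by
        rw [setLIntegral_const]
        ring

theorem exists_lintegral_enorm_sub_sq_le_of_convex (hUo : IsOpen U) (hUc : Convex ℝ U)
    (hUb : Bornology.IsBounded U) (hf : ContDiffOn ℝ 1 f U) :
    ∃ c : F, ∫⁻ x in U, ‖f x - c‖ₑ ^ 2 ≤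
      4 * ediam U ^ 2 * ∫⁻ x in U, ‖fderiv ℝ f x‖ₑ ^ 2 := by
  rcases U.eq_empty_or_nonempty with rfl | hne
  · exact ⟨0, by simp⟩
  have hm : AEMeasurable (Function.uncurry fun y x ↦ ‖f x - f y‖ₑ ^ 2)
      ((volume.restrict U).prod (volume.restrict U)) := by
    rw [Measure.prod_restrict]
    exact (((hf.continuousOn.comp continuousOn_snd fun p hp ↦ hp.2).sub
      (hf.continuousOn.comp continuousOn_fst fun p hp ↦ hp.1)).enorm.aemeasurable
        (hUo.measurableSet.prod hUo.measurableSet)).pow_const 2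
  obtain ⟨y, -, hy⟩ := exists_le_setLAverage (hUo.measure_pos volume hne).ne'
    hUb.measure_lt_top.ne hm.lintegral_prod_right'
  refine ⟨f y, hy.trans ?_⟩
  rw [setLAverage_eq]
  exact ENNReal.div_le_of_le_mul (lintegral_lintegral_enorm_sub_sq_le hUo hUc hf)

end ConvexPoincare

section SpiralPoincare

variable {F : Type*} [NormedAddCommGroup F] [NormedSpace ℝ F] {U D : Set ℂ} {f : ℂ → F} {b μ : ℂ}
  {R : ℝ≥0∞}

theorem lintegral_enorm_sub_sq_le_of_mapsTo_spiralFlow (hU : IsOpen U) (hf : ContDiffOn ℝ 1 f U)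
    (hflow : ∀ t ∈ Icc (0 : ℝ) 1, MapsTo (spiralFlow b μ t) U U) (hR : ∀ x ∈ U, ‖x - b‖ₑ ≤ R)
    (hD : MapsTo (spiralFlow b μ 1) U D) {c : F} {A : ℝ≥0∞}
    (hA : ∫⁻ x in D, ‖f x - c‖ₑ ^ 2 ≤ ‖Complex.exp (-μ)‖ₑ ^ 2 * A) :
    ∫⁻ x in U, ‖f x - c‖ₑ ^ 2 ≤
      2 * (‖μ‖ₑ ^ 2 * R ^ 2 * (∫⁻ x in U, ‖fderiv ℝ f x‖ₑ ^ 2) + A) := by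
  have flow_one : MapsTo (spiralFlow b μ 1) U U := hflow 1 (right_mem_Icc.2 zero_le_one)
  have lintegral_flow_le : ∫⁻ x in U, ‖f (spiralFlow b μ 1 x) - c‖ₑ ^ 2 ≤ A := by
    have h := spiralFlow.enorm_exp_sq_mul_setLIntegral_comp_le hU.measurableSet hD
      fun x ↦ ‖f x - c‖ₑ ^ 2
    rw [Complex.ofReal_one, one_mul] at h
    exact (ENNReal.mul_le_mul_iff_right (by simp [Complex.exp_ne_zero]) (by simp)).1 (h.trans hA)
  have hm : AEMeasurable (fun x ↦ ‖f (spiralFlow b μ 1 x) - f x‖ₑ ^ 2) (volume.restrict U) := by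
    have hc : Continuous (spiralFlow b μ 1) :=
      spiralFlow.continuous_uncurry.comp (Continuous.prodMk_left 1)
    exact (((hf.continuousOn.comp hc.continuousOn flow_one).sub
      hf.continuousOn).enorm.aemeasurable hU.measurableSet).pow_const 2
  calc ∫⁻ x in U, ‖f x - c‖ₑ ^ 2
      ≤ ∫⁻ x in U, 2 * (‖f (spiralFlow b μ 1 x) - f x‖ₑ ^ 2 +
          ‖f (spiralFlow b μ 1 x) - c‖ₑ ^ 2) := lintegral_mono fun x ↦ enorm_sub_sq_le _ _ _
    _ = 2 * ((∫⁻ x in U, ‖f (spiralFlow b μ 1 x) - f x‖ₑ ^ 2) +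
          ∫⁻ x in U, ‖f (spiralFlow b μ 1 x) - c‖ₑ ^ 2) := by
        rw [lintegral_const_mul' 2 _ ENNReal.ofNat_ne_top, lintegral_add_left' hm]
    _ ≤ 2 * (‖μ‖ₑ ^ 2 * R ^ 2 * (∫⁻ x in U, ‖fderiv ℝ f x‖ₑ ^ 2) + A) := by
        gcongr
        exact lintegral_enorm_spiralFlow_one_sub_sq_le hU hf hflow hR

theorem exists_lintegral_enorm_sub_sq_le_of_ball_subset {R : ℝ≥0} (hU : IsOpen U)
    (hf : ContDiffOn ℝ 1 f U) (hflow : ∀ t ∈ Icc (0 : ℝ) 1, MapsTo (spiralFlow b μ t) U U)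
    (hUR : U ⊆ ball b R) (hball : ball b (R * ‖Complex.exp (-μ)‖) ⊆ U) :
    ∃ c : F, ∫⁻ x in U, ‖f x - c‖ₑ ^ 2 ≤
      (2 * ‖μ‖ₑ ^ 2 + 32) * R ^ 2 * ∫⁻ x in U, ‖fderiv ℝ f x‖ₑ ^ 2 := by
  set D := ball b (R * ‖Complex.exp (-μ)‖)
  obtain ⟨c, hc⟩ := exists_lintegral_enorm_sub_sq_le_of_convex isOpen_ball (convex_ball _ _)
    isBounded_ball (hf.mono hball)
  have ediam_D_le : ediam D ≤ 2 * (R * ‖Complex.exp (-μ)‖ₑ) := by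
    have h := ediam_eball_le (x := b) (r := (R * ‖Complex.exp (-μ)‖₊ : ℝ≥0))
    rwa [eball_coe, ENNReal.coe_mul] at h
  have mapsTo_D : MapsTo (spiralFlow b μ 1) U D := fun x hx ↦ by
    have := mem_ball_iff_norm.1 (hUR hx)
    simp only [D, spiralFlow, mem_ball_iff_norm, add_sub_cancel_left, norm_mul, Complex.ofReal_one,
      one_mul, mul_comm (R : ℝ)]
    gcongr
    simp [Complex.exp_ne_zero]
  refine ⟨c, (lintegral_enorm_sub_sq_le_of_mapsTo_spiralFlow hU hf hflow (R := R) (fun x hx ↦ ?_)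
    mapsTo_D (A := 16 * R ^ 2 * ∫⁻ x in U, ‖fderiv ℝ f x‖ₑ ^ 2) ?_).trans_eq (by ring)⟩
  · rw [← edist_eq_enorm_sub]
    exact edist_le_coe.2 (mem_ball.1 (hUR hx)).le
  · calc ∫⁻ x in D, ‖f x - c‖ₑ ^ 2
        ≤ 4 * ediam D ^ 2 * ∫⁻ x in D, ‖fderiv ℝ f x‖ₑ ^ 2 := hc
      _ ≤ 4 * (2 * (R * ‖Complex.exp (-μ)‖ₑ)) ^ 2 * ∫⁻ x in U, ‖fderiv ℝ f x‖ₑ ^ 2 := by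
          gcongr
      _ = _ := by ring

end SpiralPoincare

section AverageOscillation

theorem pi_mul_sq_le_measureReal_of_ball_subset {s : Set ℂ} {a : ℂ} {r : ℝ} (hr : 0 ≤ r)
    (hs : volume s ≠ ∞) (h : ball a r ⊆ s) : π * r ^ 2 ≤ volume.real s := by
  refine le_of_eq_of_le ?_ (measureReal_mono h hs)
  rw [measureReal_def, Complex.volume_ball, ENNReal.toReal_mul, ENNReal.toReal_pow,
    ENNReal.toReal_ofReal hr, mul_comm]
  rfl

theorem integral_sub_average_sq_le_of_ball_subset {U : Set ℂ} {f : ℂ → ℝ} {b μ : ℂ} {R : ℝ≥0}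
    (hU : IsOpen U) (hf : ContDiffOn ℝ 1 f U)
    (hg : IntegrableOn (fun z ↦ ‖fderiv ℝ f z‖ ^ 2) U)
    (hflow : ∀ t ∈ Icc (0 : ℝ) 1, MapsTo (spiralFlow b μ t) U U)
    (hUR : U ⊆ ball b R) (hball : ball b (R * ‖Complex.exp (-μ)‖) ⊆ U) :
    ∫ z in U, (f z - ⨍ w in U, f w) ^ 2 ≤
      (2 * ‖μ‖ ^ 2 + 32) / (π * ‖Complex.exp (-μ)‖ ^ 2) * volume.real U *
        ∫ z in U, ‖fderiv ℝ f z‖ ^ 2 := by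
  obtain ⟨c, hc⟩ := exists_lintegral_enorm_sub_sq_le_of_ball_subset hU hf hflow hUR hball
  have hvol : volume U ≠ ∞ := (isBounded_ball.subset hUR).measure_lt_top.ne
  have : IsFiniteMeasure (volume.restrict U) := isFiniteMeasure_restrict.2 hvol
  have ofReal_const : ENNReal.ofReal ((2 * ‖μ‖ ^ 2 + 32) * (R : ℝ) ^ 2) =
      (2 * ‖μ‖ₑ ^ 2 + 32) * R ^ 2 := by
    rw [ENNReal.ofReal_mul (by positivity), ENNReal.ofReal_pow R.coe_nonneg,
      ENNReal.ofReal_coe_nnreal, ENNReal.ofReal_add (by positivity) (by positivity),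
      ENNReal.ofReal_mul zero_le_two,
      ENNReal.ofReal_pow (norm_nonneg _), ofReal_norm, ENNReal.ofReal_ofNat, ENNReal.ofReal_ofNat]
  refine (integral_sub_average_sq_le_of_lintegral_le (C := (2 * ‖μ‖ ^ 2 + 32) * (R : ℝ) ^ 2)
    (hf.continuousOn.aestronglyMeasurable hU.measurableSet) hg (by positivity)
    (hc.trans_eq (by rw [ofReal_const]))).trans
    (mul_le_mul_of_nonneg_right ?_ (integral_nonneg fun z ↦ sq_nonneg _))
  have exp_ne_zero := norm_ne_zero_iff.2 (Complex.exp_ne_zero (-μ))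
  calc (2 * ‖μ‖ ^ 2 + 32) * (R : ℝ) ^ 2
      = (2 * ‖μ‖ ^ 2 + 32) / (π * ‖Complex.exp (-μ)‖ ^ 2) *
          (π * (R * ‖Complex.exp (-μ)‖) ^ 2) := by field_simp
    _ ≤ (2 * ‖μ‖ ^ 2 + 32) / (π * ‖Complex.exp (-μ)‖ ^ 2) * volume.real U := by
        gcongr
        exact pi_mul_sq_le_measureReal_of_ball_subset (by positivity) hvol hball

end AverageOscillation

section Univalent

variable {φ : ℂ → ℂ} {U : Set ℂ} {z : ℂ}

theorem not_eventually_eq_of_injOn (hz : U ∈ 𝓝 z) (hφ : InjOn φ U) :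
    ¬ ∀ᶠ u in 𝓝 z, φ u = φ z := fun h ↦ by
  have h_ne : ∃ᶠ u in 𝓝 z, u ≠ z :=
    (eventually_mem_nhdsWithin (a := z) (s := {z}ᶜ)).frequently.filter_mono nhdsWithin_le_nhds
  obtain ⟨u, hne, heq, hu⟩ := (h_ne.and_eventually (h.and hz)).exists
  exact hne (hφ hu (mem_of_mem_nhds hz) heq)

theorem isOpen_image_of_injOn (hU : IsOpen U) (hφ : DifferentiableOn ℂ φ U) (hinj : InjOn φ U) :
    IsOpen (φ '' U) := by
  refine isOpen_iff_mem_nhds.2 ?_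
  rintro _ ⟨z, hz, rfl⟩
  have hzU := hU.mem_nhds hz
  rcases (hφ.analyticAt hzU).eventually_constant_or_nhds_le_map_nhds with h | h
  · exact absurd h (not_eventually_eq_of_injOn hzU hinj)
  · exact h (image_mem_map hzU)

theorem continuousOn_invFunOn_image (hU : IsOpen U) (hφ : DifferentiableOn ℂ φ U)
    (hinj : InjOn φ U) : ContinuousOn (Function.invFunOn φ U) (φ '' U) := by
  refine IsOpenMap.continuousOn_image_of_leftInvOn (fun V hV ↦ ?_) hinj.leftInvOn_invFunOn
  rw [domRestrict_eq, image_comp]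
  exact isOpen_image_of_injOn (hU.isOpenMap_subtype_val V hV)
    (hφ.mono (Subtype.coe_image_subset U V)) (hinj.mono (Subtype.coe_image_subset U V))

theorem hasDerivAt_invFunOn (hU : IsOpen U) (hφ : DifferentiableOn ℂ φ U) (hinj : InjOn φ U)
    (hz : z ∈ U) (hderiv : deriv φ z ≠ 0) :
    HasDerivAt (Function.invFunOn φ U) (deriv φ z)⁻¹ (φ z) :=
  ((hφ.analyticAt (hU.mem_nhds hz)).hasStrictDerivAt.to_local_left_inverse hderiv
    ((hU.eventually_mem hz).mono fun _ hu ↦ hinj.leftInvOn_invFunOn hu)).hasDerivAt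

theorem not_eventually_deriv_eq_zero_of_injOn (hz : U ∈ 𝓝 z) (hφ : DifferentiableOn ℂ φ U)
    (hinj : InjOn φ U) : ¬ ∀ᶠ u in 𝓝 z, deriv φ u = 0 := fun h ↦ by
  obtain ⟨ε, hε, hball⟩ := Metric.eventually_nhds_iff_ball.1 (h.and hz)
  refine not_eventually_eq_of_injOn hz hinj ?_
  filter_upwards [ball_mem_nhds z hε] with u hu
  exact isOpen_ball.is_const_of_deriv_eq_zero (convex_ball z ε).isPreconnected
    (hφ.mono fun v hv ↦ (hball v hv).2) (fun v hv ↦ (hball v hv).1) hu (mem_ball_self hε)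

theorem eventually_eq_zero_of_abs_arg_le {q : ℂ → ℂ} {θ : ℝ} (hq : AnalyticAt ℂ q z)
    (hqz : q z = 0) (hθ : θ < π) (harg : ∀ᶠ u in 𝓝 z, |(q u).arg| ≤ θ) :
    ∀ᶠ u in 𝓝 z, q u = 0 := by
  rcases hq.eventually_constant_or_nhds_le_map_nhds with h | h
  · simpa only [hqz] using h
  · rw [hqz] at h
    have harg_zero : ∀ᶠ v in 𝓝 (0 : ℂ), |v.arg| ≤ θ := h harg
    have tendsto_neg : Tendsto (fun t : ℝ ↦ (t : ℂ)) (𝓝[<] 0) (𝓝 0) :=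
      (Complex.continuous_ofReal.tendsto' 0 0 Complex.ofReal_zero).mono_left nhdsWithin_le_nhds
    obtain ⟨t, harg_t, ht⟩ :=
      ((tendsto_neg.eventually harg_zero).and self_mem_nhdsWithin).exists
    rw [Complex.arg_ofReal_of_neg ht, abs_of_pos pi_pos] at harg_t
    exact absurd harg_t hθ.not_ge

end Univalent

section FlowInvariance

variable {φ : ℂ → ℂ} {μ : ℂ}

theorem hasDerivAt_norm_sq_invFunOn_spiralFlow {U : Set ℂ} (hU : IsOpen U)
    (hφ : DifferentiableOn ℂ φ U) (hinj : InjOn φ U) {z w : ℂ} (hz : z ∈ U) (hz0 : z ≠ 0)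
    (hderiv : deriv φ z ≠ 0) {t : ℝ} (ht : spiralFlow 0 μ t w = φ z) :
    HasDerivAt (fun t ↦ ‖Function.invFunOn φ U (spiralFlow 0 μ t w)‖ ^ 2)
      (-2 * ‖z‖ ^ 2 * (μ * φ z / (z * deriv φ z)).re) t := by
  have hψ := hasDerivAt_invFunOn hU hφ hinj hz hderiv
  have hpath : HasDerivAt (fun t ↦ spiralFlow 0 μ t w) (-μ * φ z) t :=
    (spiralFlow.hasDerivAt_time t w).congr_deriv (by rw [← ht, spiralFlow, zero_add])
  have hcomp : HasDerivAt (fun t ↦ Function.invFunOn φ U (spiralFlow 0 μ t w))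
      ((deriv φ z)⁻¹ * (-μ * φ z)) t :=
    hψ.comp_of_eq t hpath ht.symm
  refine hcomp.norm_sq.congr_deriv ?_
  rw [ht, hinj.leftInvOn_invFunOn hz,
    show (deriv φ z)⁻¹ * (-μ * φ z) = -(z * (μ * φ z / (z * deriv φ z))) by field_simp,
    Complex.inner, neg_mul, mul_right_comm, Complex.mul_conj, Complex.neg_re,
    Complex.re_ofReal_mul, Complex.normSq_eq_norm_sq]
  ring

theorem mem_of_hasDerivAt_nonpos {X : Type*} [TopologicalSpace X] {Ω : Set X} {N : X → ℝ}
    {P : ℝ → X} (hΩ : IsOpen Ω) (hP : Continuous P) (hP0 : P 0 ∈ Ω)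
    (hclosed : IsClosed {x ∈ Ω | N x ≤ N (P 0)})
    (hderiv : ∀ t, P t ∈ Ω → ∃ D ≤ 0, HasDerivAt (fun t ↦ N (P t)) D t) {T : ℝ} (hT : 0 ≤ T) :
    P T ∈ Ω := by
  suffices h : Icc 0 T ⊆ P ⁻¹' {x ∈ Ω | N x ≤ N (P 0)} from (h (right_mem_Icc.2 hT)).1
  refine IsClosed.Icc_subset_of_forall_exists_gt ((hclosed.preimage hP).inter isClosed_Icc)
    ⟨hP0, le_rfl⟩ ?_
  rintro t ⟨⟨htΩ, htN⟩, -⟩ y hy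
  obtain ⟨r, hr, hsub_r⟩ := mem_nhdsGE_iff_exists_Icc_subset.1
    (mem_nhdsWithin_of_mem_nhds (hP.continuousAt.preimage_mem_nhds (hΩ.mem_nhds htΩ)))
  obtain ⟨u, hur, hu⟩ : ∃ u ≤ r, u ∈ Ioc t y :=
    ⟨min r y, min_le_left r y, lt_min hr hy, min_le_right r y⟩
  have hsub : Icc t u ⊆ P ⁻¹' Ω := (Icc_subset_Icc_right hur).trans hsub_r
  choose! D hD hND using fun s (hs : s ∈ Icc t u) ↦ hderiv s (hsub hs)
  have anti : AntitoneOn (fun s ↦ N (P s)) (Icc t u) :=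
    antitoneOn_of_hasDerivWithinAt_nonpos (convex_Icc t u)
      (fun s hs ↦ (hND s hs).continuousAt.continuousWithinAt)
      (fun s hs ↦ (hND s (interior_subset hs)).hasDerivWithinAt)
      (fun s hs ↦ hD s (interior_subset hs))
  have hu_mem : u ∈ Icc t u := right_mem_Icc.2 hu.1.le
  exact ⟨u, ⟨hsub hu_mem, (anti (left_mem_Icc.2 hu.1.le) hu_mem hu.1.le).trans htN⟩, hu⟩

theorem mapsTo_spiralFlow_image_ball (hφ : DifferentiableOn ℂ φ (ball 0 1))
    (hinj : InjOn φ (ball 0 1)) (hφ0 : φ 0 = 0)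
    (hderiv : ∀ z ∈ ball (0 : ℂ) 1, z ≠ 0 → deriv φ z ≠ 0)
    (hμ : ∀ z ∈ ball (0 : ℂ) 1, z ≠ 0 → 0 ≤ (μ * φ z / (z * deriv φ z)).re) {T : ℝ} (hT : 0 ≤ T) :
    MapsTo (spiralFlow 0 μ T) (φ '' ball 0 1) (φ '' ball 0 1) := by
  rintro _ ⟨z, hz, rfl⟩
  by_cases hz0 : z = 0
  · exact ⟨0, mem_ball_self one_pos, by simp [hz0, hφ0, spiralFlow]⟩
  set ψ := Function.invFunOn φ (ball 0 1)
  have hψ : LeftInvOn ψ φ (ball 0 1) := hinj.leftInvOn_invFunOn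
  have flow_ne_zero (t : ℝ) : spiralFlow 0 μ t (φ z) ≠ 0 := by
    have : φ z ≠ 0 := fun h ↦ hz0 (hinj hz (mem_ball_self one_pos) (h.trans hφ0.symm))
    simp [spiralFlow, this, Complex.exp_ne_zero]
  have sublevel : {w ∈ φ '' ball 0 1 | ‖ψ w‖ ^ 2 ≤ ‖ψ (spiralFlow 0 μ 0 (φ z))‖ ^ 2} =
      φ '' closedBall 0 ‖z‖ := by
    simp only [spiralFlow.zero, hψ hz, sq_le_sq₀ (norm_nonneg _) (norm_nonneg _)]
    ext w
    constructor
    · rintro ⟨⟨u, hu, rfl⟩, h⟩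
      exact ⟨u, mem_closedBall_zero_iff.2 (by rwa [hψ hu] at h), rfl⟩
    · rintro ⟨u, hu, rfl⟩
      have hu1 : u ∈ ball 0 1 := closedBall_subset_ball (mem_ball_zero_iff.1 hz) hu
      exact ⟨⟨u, hu1, rfl⟩, by rw [hψ hu1]; exact mem_closedBall_zero_iff.1 hu⟩
  refine mem_of_hasDerivAt_nonpos (N := fun w ↦ ‖ψ w‖ ^ 2)
    (P := fun t ↦ spiralFlow 0 μ t (φ z)) (isOpen_image_of_injOn isOpen_ball hφ hinj)
    (spiralFlow.continuous_uncurry.comp (Continuous.prodMk_right (φ z)))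
    ⟨z, hz, (spiralFlow.zero _).symm⟩ ?_ ?_ hT
  · rw [sublevel]
    exact ((isCompact_closedBall 0 ‖z‖).image_of_continuousOn (hφ.continuousOn.mono
      (closedBall_subset_ball (mem_ball_zero_iff.1 hz)))).isClosed
  · rintro t ⟨u, hu, hut⟩
    have hu0 : u ≠ 0 := by
      rintro rfl
      exact flow_ne_zero t (hut.symm.trans hφ0)
    exact ⟨_, by nlinarith [hμ u hu hu0, sq_nonneg ‖u‖],
      hasDerivAt_norm_sq_invFunOn_spiralFlow isOpen_ball hφ hinj hu hu0 (hderiv u hu hu0) hut.symm⟩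

end FlowInvariance

section SpiralShaped

theorem cos_mul_norm_le_re_of_abs_arg_le {q : ℂ} {θ : ℝ} (harg : |q.arg| ≤ θ) (hθ : θ ≤ π) :
    cos θ * ‖q‖ ≤ q.re := by
  rw [← Complex.norm_mul_cos_arg q, mul_comm, ← cos_abs q.arg]
  exact mul_le_mul_of_nonneg_left (cos_le_cos_of_nonneg_of_le_pi (abs_nonneg _) hθ harg)
    (norm_nonneg q)

theorem re_add_div_nonneg {q v : ℂ} {c s : ℝ} (hq : c * ‖q‖ ≤ q.re) (hs : 0 ≤ s)
    (hv : ‖v‖ ≤ s * c) : 0 ≤ ((s + v) / q).re := by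
  have hsq : s * (c * ‖q‖) ≤ s * q.re := mul_le_mul_of_nonneg_left hq hs
  have hvq : -(v * starRingEnd ℂ q).re ≤ s * c * ‖q‖ := by
    refine (neg_le_abs _).trans ((Complex.abs_re_le_norm _).trans ?_)
    rw [norm_mul, RCLike.norm_conj]
    exact mul_le_mul_of_nonneg_right hv (norm_nonneg q)
  rw [div_eq_mul_inv, Complex.inv_def, ← mul_assoc, Complex.re_mul_ofReal, add_mul,
    Complex.add_re, Complex.re_ofReal_mul, Complex.conj_re]
  exact mul_nonneg (by linarith) (inv_nonneg.2 (Complex.normSq_nonneg q))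

theorem norm_exp_neg_ofReal_mul_exp (s δ : ℝ) :
    ‖Complex.exp (-(s * Complex.exp (-(Complex.I * δ))))‖ = exp (-(s * cos δ)) := by
  rw [Complex.norm_exp, Complex.neg_re, Complex.re_ofReal_mul, mul_comm Complex.I,
    ← neg_mul (δ : ℂ), ← Complex.ofReal_neg, Complex.exp_ofReal_mul_I_re, cos_neg]

theorem norm_ofReal_mul_exp {s : ℝ} (hs : 0 ≤ s) (δ : ℝ) :
    ‖s * Complex.exp (-(Complex.I * δ))‖ = s := by
  rw [mul_comm Complex.I, ← neg_mul, ← Complex.ofReal_neg, norm_mul,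
    Complex.norm_exp_ofReal_mul_I, mul_one, Complex.norm_of_nonneg hs]

/-- An injective holomorphic map of the unit disc, fixing `0`, onto a spiral-shaped domain with
spiral direction `δ`. The angle `θ` is the half-opening `β * π / 2` of the sector in the usual
definition of a `β`-spiral-shaped domain; the origin is left out of the sector condition because the
quotient there is `0 / 0`. -/
structure IsSpiralShapedMap (θ δ : ℝ) (φ : ℂ → ℂ) : Prop where
  differentiableOn : DifferentiableOn ℂ φ (ball 0 1)
  injOn : InjOn φ (ball 0 1)
  map_zero : φ 0 = 0
  abs_arg_le : ∀ z ∈ ball (0 : ℂ) 1, z ≠ 0 →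
    |Complex.arg (Complex.exp (Complex.I * δ) * z * deriv φ z / φ z)| ≤ θ

namespace IsSpiralShapedMap

variable {θ δ : ℝ} {φ : ℂ → ℂ} {z w v : ℂ}

theorem map_ne_zero (h : IsSpiralShapedMap θ δ φ) (hz : z ∈ ball 0 1) (hz0 : z ≠ 0) : φ z ≠ 0 :=
  fun hφz ↦ hz0 (h.injOn hz (mem_ball_self one_pos) (hφz.trans h.map_zero.symm))

theorem cos_pos (h : IsSpiralShapedMap θ δ φ) (hθ : θ < π / 2) : 0 < cos θ := by
  have hθ0 : 0 ≤ θ := (abs_nonneg _).trans (h.abs_arg_le (1 / 2) (by norm_num) (by norm_num))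
  exact cos_pos_of_mem_Ioo ⟨by linarith [pi_pos], hθ⟩

theorem zero_mem_image (h : IsSpiralShapedMap θ δ φ) : 0 ∈ φ '' ball 0 1 :=
  ⟨0, mem_ball_self one_pos, h.map_zero⟩

theorem isOpen_image (h : IsSpiralShapedMap θ δ φ) : IsOpen (φ '' ball 0 1) :=
  isOpen_image_of_injOn isOpen_ball h.differentiableOn h.injOn

theorem deriv_ne_zero (h : IsSpiralShapedMap θ δ φ) (hθ : θ < π) (hz : z ∈ ball 0 1)
    (hz0 : z ≠ 0) : deriv φ z ≠ 0 := fun hderiv ↦ by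
  have ball_nhds : ball (0 : ℂ) 1 ∈ 𝓝 z := isOpen_ball.mem_nhds hz
  have ball_diff : ∀ᶠ u in 𝓝 z, u ∈ ball (0 : ℂ) 1 ∧ u ≠ 0 :=
    (show ∀ᶠ u in 𝓝 z, u ∈ ball (0 : ℂ) 1 from ball_nhds).and (isOpen_ne.mem_nhds hz0)
  have hφ : AnalyticAt ℂ φ z := h.differentiableOn.analyticAt ball_nhds
  have quotient_eq_zero := eventually_eq_zero_of_abs_arg_le
    (q := fun u ↦ Complex.exp (Complex.I * δ) * u * deriv φ u / φ u)
    (((analyticAt_const.mul analyticAt_id).mul hφ.deriv).div hφ (h.map_ne_zero hz hz0))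
    (by rw [hderiv, mul_zero, zero_div]) hθ
    (ball_diff.mono fun u hu ↦ h.abs_arg_le u hu.1 hu.2)
  refine not_eventually_deriv_eq_zero_of_injOn ball_nhds h.differentiableOn h.injOn ?_
  filter_upwards [quotient_eq_zero, ball_diff] with u hqu hu
  simpa [Complex.exp_ne_zero, hu.2, h.map_ne_zero hu.1 hu.2] using hqu

theorem mapsTo_spiralFlow (h : IsSpiralShapedMap θ δ φ) (hθ : θ < π) {s : ℝ} (hs : 0 ≤ s)
    {μ : ℂ} (hμ : ‖μ - s * Complex.exp (-(Complex.I * δ))‖ ≤ s * cos θ) {t : ℝ} (ht : 0 ≤ t) :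
    MapsTo (spiralFlow 0 μ t) (φ '' ball 0 1) (φ '' ball 0 1) := by
  refine mapsTo_spiralFlow_image_ball h.differentiableOn h.injOn h.map_zero
    (fun z ↦ h.deriv_ne_zero hθ) (fun z hz hz0 ↦ ?_) ht
  have norm_exp : ‖Complex.exp (Complex.I * δ)‖ = 1 := by
    rw [mul_comm, Complex.norm_exp_ofReal_mul_I]
  have hv : ‖(μ - s * Complex.exp (-(Complex.I * δ))) * Complex.exp (Complex.I * δ)‖ ≤
      s * cos θ := by
    rwa [norm_mul, norm_exp, mul_one]
  refine (re_add_div_nonneg (cos_mul_norm_le_re_of_abs_arg_le (h.abs_arg_le z hz hz0) hθ.le) hs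
    hv).trans_eq (congrArg Complex.re ?_)
  have := h.deriv_ne_zero hθ hz hz0
  have := h.map_ne_zero hz hz0
  rw [Complex.exp_neg]
  field_simp [Complex.exp_ne_zero]
  ring

theorem mem_image_of_norm_le (h : IsSpiralShapedMap θ δ φ) (hθ : θ < π / 2)
    (hδ : |δ| < π / 2) (hw : w ∈ φ '' ball 0 1)
    (hv : ‖v‖ ≤ ‖w‖ * exp (-(π / cos θ * cos δ))) : v ∈ φ '' ball 0 1 := by
  rcases eq_or_ne v 0 with rfl | hv0
  · exact h.zero_mem_image
  have norm_v : 0 < ‖v‖ := norm_pos_iff.2 hv0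
  have norm_w : 0 < ‖w‖ := pos_of_mul_pos_left (norm_v.trans_le hv) (exp_pos _).le
  have hθ_pi : θ < π := hθ.trans (half_lt_self pi_pos)
  have hθ_cos : 0 < cos θ := h.cos_pos hθ
  have hδ_cos : 0 < cos δ := cos_pos_of_mem_Ioo (abs_lt.1 hδ)
  set s := log (‖w‖ / ‖v‖) / cos δ with hs_def
  have hs_cos : s * cos δ = log (‖w‖ / ‖v‖) := div_mul_cancel₀ _ hδ_cos.ne'
  have hs : π / cos θ ≤ s := by
    rw [hs_def, le_div_iff₀ hδ_cos, le_log_iff_exp_le (div_pos norm_w norm_v), le_div_iff₀ norm_v]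
    rwa [exp_neg, ← div_eq_mul_inv, le_div_iff₀' (exp_pos _)] at hv
  set u := Complex.exp (-(s * Complex.exp (-(Complex.I * δ)))) * w / v with hu
  have norm_u : ‖u‖ = 1 := by
    rw [hu, norm_div, norm_mul, norm_exp_neg_ofReal_mul_exp, hs_cos, exp_neg,
      exp_log (div_pos norm_w norm_v)]
    field_simp
  have exp_arg : Complex.exp (u.arg * Complex.I) = u := by
    simpa only [norm_u, Complex.ofReal_one, one_mul] using Complex.norm_mul_exp_arg_mul_I u
  have hμ : ‖s * Complex.exp (-(Complex.I * δ)) + u.arg * Complex.I -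
      s * Complex.exp (-(Complex.I * δ))‖ ≤ s * cos θ := by
    rw [add_sub_cancel_left, norm_mul, Complex.norm_I, mul_one, Complex.norm_real]
    exact (Complex.abs_arg_le_pi u).trans ((div_le_iff₀ hθ_cos).1 hs)
  convert h.mapsTo_spiralFlow hθ_pi ((div_pos pi_pos hθ_cos).le.trans hs) hμ zero_le_one hw using 1
  have hw0 : w ≠ 0 := norm_pos_iff.1 norm_w
  rw [spiralFlow, Complex.ofReal_one, one_mul, neg_add, Complex.exp_add,
    Complex.exp_neg (_ * Complex.I), exp_arg, hu, zero_add, sub_zero]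
  field_simp [Complex.exp_ne_zero]

theorem image_ne_univ (h : IsSpiralShapedMap θ δ φ) (hθ : θ < π) : φ '' ball 0 1 ≠ univ :=
    fun himage ↦ by
  set ψ := Function.invFunOn φ (ball 0 1)
  have hψ : LeftInvOn ψ φ (ball 0 1) := h.injOn.leftInvOn_invFunOn
  have surj (w : ℂ) : ∃ z ∈ ball 0 1, φ z = w := himage.ge (mem_univ w)
  have hcont : Continuous ψ := continuousOn_univ.1
    (himage ▸ continuousOn_invFunOn_image isOpen_ball h.differentiableOn h.injOn)
  have hdiff : Differentiable ℂ ψ := by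
    rw [← differentiableOn_univ, ← Complex.differentiableOn_compl_singleton_and_continuousAt_iff
      (c := 0) univ_mem]
    refine ⟨fun w hw ↦ ?_, hcont.continuousAt⟩
    obtain ⟨z, hz, rfl⟩ := surj w
    have hz0 : z ≠ 0 := fun hz0 ↦ hw.2 (hz0 ▸ h.map_zero)
    exact (hasDerivAt_invFunOn isOpen_ball h.differentiableOn h.injOn hz
      (h.deriv_ne_zero hθ hz hz0)).differentiableAt.differentiableWithinAt
  have hbounded : Bornology.IsBounded (range ψ) := isBounded_ball.subset <| by
    rintro _ ⟨w, rfl⟩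
    exact Function.invFunOn_mem (surj w)
  have half_mem : (1 / 2 : ℂ) ∈ ball 0 1 := by norm_num
  have := hdiff.apply_eq_apply_of_bounded hbounded (φ (1 / 2)) (φ 0)
  rw [hψ half_mem, hψ (mem_ball_self one_pos)] at this
  norm_num at this

theorem isBounded_image (h : IsSpiralShapedMap θ δ φ) (hθ : θ < π / 2)
    (hδ : |δ| < π / 2) : Bornology.IsBounded (φ '' ball 0 1) := by
  rw [isBounded_iff_forall_norm_le]
  by_contra! hunbounded
  refine h.image_ne_univ (hθ.trans (half_lt_self pi_pos)) (eq_univ_of_forall fun v ↦ ?_)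
  obtain ⟨w, hw, hvw⟩ := hunbounded (‖v‖ / exp (-(π / cos θ * cos δ)))
  exact h.mem_image_of_norm_le hθ hδ hw ((div_lt_iff₀ (exp_pos _)).1 hvw).le

theorem exists_ball_subset_image_subset_ball (h : IsSpiralShapedMap θ δ φ) (hθ : θ < π / 2)
    (hδ : |δ| < π / 2) :
    ∃ R : ℝ≥0, ball 0 (R * exp (-(π / cos θ * cos δ))) ⊆ φ '' ball 0 1 ∧
      φ '' ball 0 1 ⊆ ball 0 R := by
  set norms := norm '' (φ '' ball 0 1)
  have hbdd : BddAbove norms :=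
    (lipschitzWith_one_norm.isBounded_image (h.isBounded_image hθ hδ)).bddAbove
  have hnonempty : norms.Nonempty := ⟨0, 0, h.zero_mem_image, norm_zero⟩
  have subset_closedBall : φ '' ball 0 1 ⊆ closedBall 0 (sSup norms) := fun w hw ↦
    mem_closedBall_zero_iff.2 (le_csSup hbdd (mem_image_of_mem _ hw))
  refine ⟨⟨sSup norms, le_csSup hbdd ⟨0, h.zero_mem_image, norm_zero⟩⟩, fun v hv ↦ ?_, ?_⟩
  · rw [mem_ball_zero_iff, ← div_lt_iff₀ (exp_pos _)] at hv
    obtain ⟨_, ⟨w, hw, rfl⟩, hvw⟩ := exists_lt_of_lt_csSup hnonempty hv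
    exact h.mem_image_of_norm_le hθ hδ hw ((div_lt_iff₀ (exp_pos _)).1 hvw).le
  · obtain ⟨z, hz, hz0⟩ : ∃ w ∈ φ '' ball 0 1, w ≠ 0 :=
      ⟨φ (1 / 2), mem_image_of_mem φ (by norm_num), h.map_ne_zero (by norm_num) (by norm_num)⟩
    have sSup_pos : 0 < sSup norms :=
      (norm_pos_iff.2 hz0).trans_le (le_csSup hbdd (mem_image_of_mem _ hz))
    exact (h.isOpen_image.subset_interior_iff.2 subset_closedBall).trans_eq
      (interior_closedBall 0 sSup_pos.ne')

end IsSpiralShapedMap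

theorem neumann_poincare_spiral_shaped_general {θ δ : ℝ} {φ : ℂ → ℂ}
    (h : IsSpiralShapedMap θ δ φ) (hθ : θ < π / 2) (hδ : |δ| < π / 2) {f : ℂ → ℝ}
    (hf : ContDiffOn ℝ 1 f (φ '' ball 0 1))
    (hg : IntegrableOn (fun z ↦ ‖fderiv ℝ f z‖ ^ 2) (φ '' ball 0 1)) :
    ∫ z in φ '' ball 0 1, (f z - ⨍ w in φ '' ball 0 1, f w) ^ 2 ≤
      (2 * (π / cos θ) ^ 2 + 32) * exp (2 * (π / cos θ) * cos δ) / π *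
        volume.real (φ '' ball 0 1) * ∫ z in φ '' ball 0 1, ‖fderiv ℝ f z‖ ^ 2 := by
  set S := π / cos θ
  set μ : ℂ := S * Complex.exp (-(Complex.I * δ))
  have hS : 0 ≤ S := (div_pos pi_pos (h.cos_pos hθ)).le
  have norm_exp_μ : ‖Complex.exp (-μ)‖ = exp (-(S * cos δ)) := norm_exp_neg_ofReal_mul_exp S δ
  have norm_μ : ‖μ‖ = S := norm_ofReal_mul_exp hS δ
  obtain ⟨R, hball, hΩR⟩ := h.exists_ball_subset_image_subset_ball hθ hδ
  have hflow : ∀ t ∈ Icc (0 : ℝ) 1,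
      MapsTo (spiralFlow 0 μ t) (φ '' ball 0 1) (φ '' ball 0 1) := fun t ht ↦
    h.mapsTo_spiralFlow (hθ.trans (half_lt_self pi_pos)) hS
      (by rw [sub_self, norm_zero]; exact mul_nonneg hS (h.cos_pos hθ).le) ht.1
  refine (integral_sub_average_sq_le_of_ball_subset h.isOpen_image hf hg hflow hΩR
    (by rwa [norm_exp_μ])).trans_eq ?_
  rw [norm_μ, norm_exp_μ, exp_neg, inv_pow, ← exp_nat_mul, Nat.cast_ofNat, ← mul_assoc]
  field_simp

end SpiralShaped

section Constants

theorem inv_sin_two_mul_le_cot {x : ℝ} (hx0 : 0 < x) (hx : x ≤ π / 4) :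
    (sin (2 * x))⁻¹ ≤ cot x := by
  have hsin : 0 < sin x := sin_pos_of_pos_of_lt_pi hx0 (by linarith [pi_pos])
  have hcos : 0 < cos x := cos_pos_of_mem_Ioo ⟨by linarith, by linarith [pi_pos]⟩
  have hcos_two : 0 ≤ cos (2 * x) := cos_nonneg_of_mem_Icc ⟨by linarith [pi_pos], by linarith⟩
  have hcot : cot x * sin (2 * x) = 1 + cos (2 * x) := by
    rw [cot_eq_cos_div_sin, sin_two_mul, cos_two_mul]
    field_simp
    ring
  rw [inv_le_iff_one_le_mul₀ (by rw [sin_two_mul]; positivity)]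
  linarith

theorem one_le_cot {x : ℝ} (hx0 : 0 < x) (hx : x ≤ π / 4) : 1 ≤ cot x :=
  (one_le_inv₀ (sin_pos_of_pos_of_lt_pi (by linarith) (by linarith [pi_pos]))).2 (sin_le_one _)
    |>.trans (inv_sin_two_mul_le_cot hx0 hx)

theorem two_mul_sq_add_mul_exp_le {S c : ℝ} (hS : 0 ≤ S) (hc : c ≤ 1) :
    (2 * S ^ 2 + 32) * exp (2 * S * c) ≤ 32 * exp (3 * S) := by
  have quadratic : 2 * S ^ 2 + 32 ≤ 32 * exp S := by
    nlinarith [quadratic_le_exp_of_nonneg hS]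
  calc (2 * S ^ 2 + 32) * exp (2 * S * c) ≤ 32 * exp S * exp (2 * S) := by
        gcongr ?_ * exp ?_
        exact mul_le_of_le_one_right (by positivity) hc
    _ = 32 * exp (3 * S) := by
        rw [mul_assoc, ← exp_add]
        ring_nf

theorem three_mul_le_div_two_mul_log_three {S k : ℝ} (hk : 1 ≤ k) (hS : S ≤ π * k) :
    3 * S ≤ π ^ 2 * (2 + π ^ 4) ^ 2 * k ^ 4 / (2 * log 3) := by
  have log_three : log 3 ≤ 2 := by
    linarith [log_le_sub_one_of_pos (show (0 : ℝ) < 3 by norm_num)]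
  have : 0 < log 3 := log_pos (by norm_num)
  calc 3 * S ≤ 3 * (π * k) := by gcongr
    _ ≤ π * (π * k ^ 4) := by
        gcongr
        · exact pi_gt_three.le
        · exact le_self_pow₀ hk (by norm_num)
    _ = π ^ 2 * (2 + 0) ^ 2 * k ^ 4 / (2 * 2) := by ring
    _ ≤ π ^ 2 * (2 + π ^ 4) ^ 2 * k ^ 4 / (2 * log 3) := by
        gcongr
        positivity

theorem rpow_one_div_le_exp_one {x α : ℝ} (hx : 0 ≤ x) (hα : 0 < α) (hxα : x ≤ exp α) :
    x ^ (1 / α) ≤ exp 1 :=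
  calc x ^ (1 / α) ≤ exp α ^ (1 / α) := rpow_le_rpow hx hxα (by positivity)
    _ = exp 1 := by rw [← exp_mul, mul_one_div_cancel hα.ne']

theorem le_ten_pow_div_rpow_sq {α ν : ℝ} (hα : 1 < α) (hν0 : 0 ≤ ν) (hν : ν < 1) :
    32 ≤ (10 ^ 6 / ((α - 1) * (1 - ν)) ^ (1 / α)) ^ 2 := by
  have base_pos : 0 < (α - 1) * (1 - ν) := mul_pos (by linarith) (by linarith)
  have rpow_le : ((α - 1) * (1 - ν)) ^ (1 / α) ≤ 3 :=
    (rpow_one_div_le_exp_one base_pos.le (by linarith)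
      (by nlinarith [add_one_le_exp α])).trans (by linarith [exp_one_lt_d9])
  calc (32 : ℝ) ≤ (10 ^ 6 / 3) ^ 2 := by norm_num
    _ ≤ (10 ^ 6 / ((α - 1) * (1 - ν)) ^ (1 / α)) ^ 2 := by gcongr

theorem one_le_div_rpow {α : ℝ} (hα : 2 < α) :
    1 ≤ ((2 * α - 2) / (α - 2)) ^ ((2 * α - 2) / α) := by
  refine one_le_rpow ?_ (div_nonneg (by linarith) (by linarith))
  rw [le_div_iff₀ (by linarith)]
  linarith

theorem spiral_constant_le {α ν S k c : ℝ} (hα : 2 < α) (hν0 : 0 ≤ ν) (hν : ν < 1) (hk : 1 ≤ k)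
    (hS0 : 0 ≤ S) (hS : S ≤ π * k) (hc : c ≤ 1) :
    (2 * S ^ 2 + 32) * exp (2 * S * c) / π ≤
      ((10 ^ 6 / ((α - 1) * (1 - ν)) ^ (1 / α)) ^ 2 * k ^ 4 / π) *
        ((2 * α - 2) / (α - 2)) ^ ((2 * α - 2) / α) *
        exp (π ^ 2 * (2 + π ^ 4) ^ 2 * k ^ 4 / (2 * log 3)) := by
  have := one_le_div_rpow hα
  calc (2 * S ^ 2 + 32) * exp (2 * S * c) / π
      ≤ 32 * exp (3 * S) / π := by
        gcongr ?_ / π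
        exact two_mul_sq_add_mul_exp_le hS0 hc
    _ = (32 * 1 / π) * 1 * exp (3 * S) := by ring
    _ ≤ _ := by
        gcongr
        · exact le_ten_pow_div_rpow_sq (by linarith) hν0 hν
        · exact one_le_pow₀ hk
        · exact three_mul_le_div_two_mul_log_three hk hS

theorem spiral_constant_le_of_angle {α β c : ℝ} (hβ0 : 0 < β) (hβ1 : β < 1) (hα : 2 < α)
    (hν : (10 : ℝ) ^ (4 * α) * (24 * π ^ 2 * cot ((1 - β) * π / 4) ^ 4) ^ α *
      ((α - 2) / (α - 1)) < 1) (hc : c ≤ 1) :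
    (2 * (π / cos (β * π / 2)) ^ 2 + 32) * exp (2 * (π / cos (β * π / 2)) * c) / π ≤
      ((10 ^ 6 / ((α - 1) *
        (1 - (10 : ℝ) ^ (4 * α) * (24 * π ^ 2 * cot ((1 - β) * π / 4) ^ 4) ^ α *
          ((α - 2) / (α - 1)))) ^ (1 / α)) ^ 2 * cot ((1 - β) * π / 4) ^ 4 / π) *
        ((2 * α - 2) / (α - 2)) ^ ((2 * α - 2) / α) *
        exp (π ^ 2 * (2 + π ^ 4) ^ 2 * cot ((1 - β) * π / 4) ^ 4 / (2 * log 3)) := by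
  have hx0 : 0 < (1 - β) * π / 4 := by nlinarith [pi_pos]
  have hx : (1 - β) * π / 4 ≤ π / 4 := by nlinarith [pi_pos]
  have cos_eq_sin : cos (β * π / 2) = sin (2 * ((1 - β) * π / 4)) := by
    rw [← cos_pi_div_two_sub]
    ring_nf
  have cos_pos : 0 < cos (β * π / 2) :=
    cos_pos_of_mem_Ioo ⟨by nlinarith [pi_pos], by nlinarith [pi_pos]⟩
  have angle_le : π / cos (β * π / 2) ≤ π * cot ((1 - β) * π / 4) := by
    rw [cos_eq_sin]
    exact mul_le_mul_of_nonneg_left (inv_sin_two_mul_le_cot hx0 hx) pi_pos.le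
  exact spiral_constant_le hα
    (mul_nonneg (by positivity) (div_nonneg (by linarith) (by linarith))) hν (one_le_cot hx0 hx)
    (div_pos pi_pos cos_pos).le angle_le hc

end Constants

end

/-- Spectral-type Poincaré inequality in a `β`-spiral-shaped domain
(Rayleigh-quotient form of the lower bound for the first nontrivial Neumann
eigenvalue): `Ω = φ(𝔻)` with `φ` injective holomorphic, `φ(0) = 0`, and
`|arg(e^{iδ}zφ′(z)/φ(z))| ≤ βπ/2` on `𝔻` for some `|δ| < βπ/2`;
`K = cot²((1−β)π/4)`. -/
theorem neumann_poincare_spiral_shaped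
    (β : ℝ) (hβ0 : 0 < β) (hβ1 : β < 1)
    (φ : ℂ → ℂ) (hφd : DifferentiableOn ℂ φ (Metric.ball 0 1))
    (hφi : Set.InjOn φ (Metric.ball 0 1)) (hφ0 : φ 0 = 0)
    (δ : ℝ) (hδ : |δ| < β * π / 2)
    (hspiral : ∀ z ∈ Metric.ball (0 : ℂ) 1, z ≠ 0 →
      |Complex.arg (Complex.exp (Complex.I * δ) * z * deriv φ z / φ z)| ≤ β * π / 2)
    (Ω : Set ℂ) (hΩ : Ω = φ '' Metric.ball 0 1) (hbdd : Bornology.IsBounded Ω)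
    (K : ℝ) (hKdef : K = Real.cot ((1 - β) * π / 4) ^ 2)
    (α : ℝ) (hα : 2 < α) (hαK : α * (K ^ 2 - 1) < 2 * K ^ 2)
    (hν : (10 : ℝ) ^ (4 * α) * (24 * π ^ 2 * Real.cot ((1 - β) * π / 4) ^ 4) ^ α *
        ((α - 2) / (α - 1)) < 1)
    (f : ℂ → ℝ) (hf : ContDiffOn ℝ 1 f Ω)
    (hf2 : IntegrableOn (fun z => (f z) ^ 2) Ω)
    (hg2 : IntegrableOn (fun z => ‖fderiv ℝ f z‖ ^ 2) Ω) :
    ∫ z in Ω, (f z - ⨍ w in Ω, f w) ^ 2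
      ≤ ((10 ^ 6 /
            ((α - 1) *
              (1 - (10 : ℝ) ^ (4 * α) * (24 * π ^ 2 * Real.cot ((1 - β) * π / 4) ^ 4) ^ α *
                ((α - 2) / (α - 1)))) ^ (1 / α)) ^ 2 *
            Real.cot ((1 - β) * π / 4) ^ 4 / π) *
          ((2 * α - 2) / (α - 2)) ^ ((2 * α - 2) / α) *
          Real.exp (π ^ 2 * (2 + π ^ 4) ^ 2 * Real.cot ((1 - β) * π / 4) ^ 4 /
            (2 * Real.log 3)) *
          (volume Ω).toReal *
          ∫ z in Ω, ‖fderiv ℝ f z‖ ^ 2 := by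
  subst hΩ
  have hθ : β * π / 2 < π / 2 := by nlinarith [pi_pos]
  have h : IsSpiralShapedMap (β * π / 2) δ φ := ⟨hφd, hφi, hφ0, hspiral⟩
  refine (neumann_poincare_spiral_shaped_general h hθ (hδ.trans hθ) hf hg2).trans ?_
  rw [measureReal_def]
  gcongr ?_ * _ * _
  exact spiral_constant_le_of_angle hβ0 hβ1 hα hν (cos_le_one δ)
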